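/- arXiv:1505.04085 — 3 statements merged into one kernel-verified Lean document; each statement's English description precedes it below -/
import Mathlib

section
/- Let X be an order-3 tensor of dimensions n_1 \times n_2 \times n_3 admitting the rank decomposition X_{ijk} = \sum_{l=1}^r (u_l)_i (v_l)_j (w_l)_k, where the family v_1, \ldots, v_r \in \mathbb{R}^{n_2} is linearly independent. Let a, b \in \mathbb{R}^{n_3} and suppose \langle w_l, b \rangle \neq 0 for every l = 1, \ldots, r. Then every matrix M \in \mathbb{R}^{n_1 \times n_1} satisfying M \cdot X^3_b = X^3_a (matrix product) satisfies M u_l = (\langle w_l, a \rangle / \langle w_l, b \rangle)\, u_l for every l = 1, \ldots, r; i.e., each u_l is an eigenvector of M with eigenvalue \langle w_l, a \rangle / \langle w_l, b \rangle. -/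
/-!
A rank decomposition of `X` turns every mode-3 contraction into a product `Uᵀ * diagonal d * V`,
where `U`, `V`, `W` have the `uₗ`, `vₗ`, `wₗ` as rows and `d = W *ᵥ a`. The outer factors do not
depend on `a`. Since the rows of `V` are linearly independent, `V` can be cancelled on the right in
`M * X³_b = X³ₐ`; the columns of the remaining identity are `⟨wₗ, b⟩ • M uₗ = ⟨wₗ, a⟩ • uₗ`.
-/

open Matrix

theorem mul_left_injective_of_linearIndependent_row {R ι κ ρ : Type*} [Semiring R] [Fintype ρ]
    {V : Matrix ρ κ R} (hV : LinearIndependent R V.row) :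
    Function.Injective fun A : Matrix ι ρ R ↦ A * V := by
  cases isEmpty_or_nonempty ι
  · exact Function.injective_of_subsingleton _
  · exact mul_left_injective_iff_vecMul_injective.mpr (vecMul_injective_iff.mpr hV)

/-- The mode-3 contraction `X³ₐ` of an order-3 tensor `X`, given in coordinates, with respect to
the vector `a`. -/
def mode3Contraction {R ι κ τ : Type*} [NonUnitalNonAssocSemiring R] [Fintype τ]
    (X : ι → κ → τ → R) (a : τ → R) : Matrix ι κ R :=
  of fun i j ↦ X i j ⬝ᵥ a

/-- `X = ∑ₗ uₗ ⊗ vₗ ⊗ wₗ` as tensors in coordinates. The index type `ρ` of the terms is not required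
to be of minimal size. -/
def IsRankDecomposition {R ι κ τ ρ : Type*} [NonUnitalNonAssocSemiring R] [Fintype ρ]
    (X : ι → κ → τ → R) (u : ρ → ι → R) (v : ρ → κ → R) (w : ρ → τ → R) : Prop :=
  ∀ i j k, X i j k = ∑ l, u l i * v l j * w l k

namespace IsRankDecomposition

variable {R ι κ τ ρ : Type*} [CommSemiring R] [Fintype τ] [Fintype ρ]
  {X : ι → κ → τ → R} {u : ρ → ι → R} {v : ρ → κ → R} {w : ρ → τ → R}

theorem mode3Contraction_eq_mul_diagonal_mul [DecidableEq ρ] (hX : IsRankDecomposition X u v w)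
    (a : τ → R) :
    mode3Contraction X a = (of u)ᵀ * diagonal (of w *ᵥ a) * of v := by
  ext i j
  calc
    ∑ k, X i j k * a k = ∑ l, ∑ k, u l i * v l j * w l k * a k := by
      simp only [hX i j, Finset.sum_mul]
      exact Finset.sum_comm
    _ = ∑ l, u l i * (w l ⬝ᵥ a) * v l j := by
      simp only [dotProduct, Finset.mul_sum, Finset.sum_mul]
      exact Finset.sum_congr rfl fun l _ ↦ Finset.sum_congr rfl fun k _ ↦ by ring
    _ = ((of u)ᵀ * diagonal (of w *ᵥ a) * of v) i j := by
      simp only [mul_apply (N := of v), mul_diagonal, transpose_apply, of_apply, mulVec]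

variable [Fintype ι] {a b : τ → R} {M : Matrix ι ι R}

theorem mul_transpose_mul_diagonal_eq [DecidableEq ρ] (hX : IsRankDecomposition X u v w)
    (hv : LinearIndependent R v) (hM : M * mode3Contraction X b = mode3Contraction X a) :
    M * (of u)ᵀ * diagonal (of w *ᵥ b) = (of u)ᵀ * diagonal (of w *ᵥ a) := by
  refine mul_left_injective_of_linearIndependent_row (V := of v) hv ?_
  simpa only [hX.mode3Contraction_eq_mul_diagonal_mul, Matrix.mul_assoc] using hM

theorem dotProduct_smul_mulVec_eq (hX : IsRankDecomposition X u v w)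
    (hv : LinearIndependent R v) (hM : M * mode3Contraction X b = mode3Contraction X a) (l : ρ) :
    (w l ⬝ᵥ b) • M *ᵥ u l = (w l ⬝ᵥ a) • u l := by
  classical
  ext i
  have entry := congrFun₂ (hX.mul_transpose_mul_diagonal_eq hv hM) i l
  rw [mul_diagonal, mul_diagonal, mul_comm, mul_comm (_ᵀ i l)] at entry
  exact entry

end IsRankDecomposition

theorem leurgans_left_eigenvectors_general {K ι κ τ ρ : Type*} [Semifield K]
    [Fintype ι] [Fintype τ] [Fintype ρ]
    {X : ι → κ → τ → K} {u : ρ → ι → K} {v : ρ → κ → K} {w : ρ → τ → K}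
    (hX : IsRankDecomposition X u v w) (hv : LinearIndependent K v)
    {a b : τ → K} {M : Matrix ι ι K}
    (hM : M * mode3Contraction X b = mode3Contraction X a)
    {l : ρ} (hb : w l ⬝ᵥ b ≠ 0) :
    M *ᵥ u l = ((w l ⬝ᵥ a) / (w l ⬝ᵥ b)) • u l := by
  rw [div_eq_inv_mul, mul_smul, eq_inv_smul_iff₀ hb]
  exact hX.dotProduct_smul_mulVec_eq hv hM l

/-- If `M · X³_b = X³ₐ` and the `vₗ` are linearly independent and `⟨wₗ, b⟩ ≠ 0`,
then each `uₗ` is an eigenvector of `M` with eigenvalue `⟨wₗ, a⟩ / ⟨wₗ, b⟩`. -/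
theorem leurgans_left_eigenvectors {n₁ n₂ n₃ r : ℕ}
    (X : Fin n₁ → Fin n₂ → Fin n₃ → ℝ)
    (u : Fin r → Fin n₁ → ℝ) (v : Fin r → Fin n₂ → ℝ) (w : Fin r → Fin n₃ → ℝ)
    (hX : ∀ i j k, X i j k = ∑ l, u l i * v l j * w l k)
    (hv : LinearIndependent ℝ v)
    (a b : Fin n₃ → ℝ) (hb : ∀ l, (∑ k, w l k * b k) ≠ 0)
    (M : Matrix (Fin n₁) (Fin n₁) ℝ)
    (hM : M * (Matrix.of fun i j => ∑ k, X i j k * b k)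
            = (Matrix.of fun i j => ∑ k, X i j k * a k)) :
    ∀ l, M.mulVec (u l) = ((∑ k, w l k * a k) / (∑ k, w l k * b k)) • u l := fun l ↦
  leurgans_left_eigenvectors_general hX hv hM (hb l)
end

section
/- Let X be an order-3 tensor of dimensions n_1 \times n_2 \times n_3 admitting the rank decomposition X_{ijk} = \sum_{l=1}^r (u_l)_i (v_l)_j (w_l)_k, where the family u_1, \ldots, u_r \in \mathbb{R}^{n_1} is linearly independent. Let a, b \in \mathbb{R}^{n_3} and suppose \langle w_l, b \rangle \neq 0 for every l = 1, \ldots, r. Then every matrix N \in \mathbb{R}^{n_2 \times n_2} satisfying X^3_b \cdot N = X^3_a (matrix product) satisfies N^T v_l = (\langle w_l, a \rangle / \langle w_l, b \rangle)\, v_l for every l = 1, \ldots, r; i.e., each v_l is an eigenvector of N^T with eigenvalue \langle w_l, a \rangle / \langle w_l, b \rangle. -/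
/-!
With `U` and `V` the matrices whose rows are the `uₗ` and the `vₗ`, contraction turns the rank
decomposition into a factorization `X³_c = Uᵀ * diag(⟨wₗ, c⟩) * V`. As the rows of `U` are
independent, `Uᵀ` can be cancelled from `X³_b * N = X³_a`, and the `l`-th row of what is left reads
`⟨wₗ, b⟩ • Nᵀ vₗ = ⟨wₗ, a⟩ • vₗ`.
-/

open Matrix

variable {ι m n p R : Type*}

section CommSemiring

variable [CommSemiring R]

theorem mul_right_injective_of_linearIndependent_col [Fintype n] {A : Matrix m n R}
    (hA : LinearIndependent R A.col) : Function.Injective fun B : Matrix n p R ↦ A * B :=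
  fun _ _ h ↦ ext_col fun j ↦ mulVec_injective_iff.2 hA congr(($h).col j)

/-- The order-3 tensor `∑ₗ uₗ ⊗ vₗ ⊗ wₗ` with the given rank decomposition, represented by its
function of entries. -/
def polyadicTensor [Fintype ι] (u : ι → m → R) (v : ι → n → R) (w : ι → p → R) : m → n → p → R :=
  fun i j k ↦ ∑ l, u l i * v l j * w l k

/-- The mode-3 contraction `X³_c` of the order-3 tensor `X`: the matrix obtained by pairing the
third index of `X` with the vector `c`. -/
def modeThreeContraction [Fintype p] (X : m → n → p → R) (c : p → R) : Matrix m n R :=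
  of fun i j ↦ X i j ⬝ᵥ c

variable [Fintype ι] [Fintype p] {u : ι → m → R} {v : ι → n → R} {w : ι → p → R}

theorem modeThreeContraction_polyadicTensor (c : p → R) :
    modeThreeContraction (polyadicTensor u v w) c =
      (of u)ᵀ * of fun l ↦ (w l ⬝ᵥ c) • v l := by
  ext i j
  calc ∑ k, (∑ l, u l i * v l j * w l k) * c k
      = ∑ l, ∑ k, u l i * v l j * w l k * c k := by
        simp only [Finset.sum_mul]
        exact Finset.sum_comm
    _ = ∑ l, u l i * ((∑ k, w l k * c k) * v l j) := by
        simp only [Finset.sum_mul, Finset.mul_sum]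
        refine Finset.sum_congr rfl fun l _ ↦ Finset.sum_congr rfl fun k _ ↦ ?_
        ring

theorem dotProduct_smul_transpose_mulVec_eq [Fintype n] {a b : p → R} {N : Matrix n n R}
    (hu : LinearIndependent R u)
    (hN : modeThreeContraction (polyadicTensor u v w) b * N =
      modeThreeContraction (polyadicTensor u v w) a) (l : ι) :
    (w l ⬝ᵥ b) • Nᵀ *ᵥ v l = (w l ⬝ᵥ a) • v l := by
  rw [modeThreeContraction_polyadicTensor, modeThreeContraction_polyadicTensor,
    Matrix.mul_assoc] at hN
  have cancelled : (of fun l ↦ (w l ⬝ᵥ b) • v l) * N = of fun l ↦ (w l ⬝ᵥ a) • v l :=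
    mul_right_injective_of_linearIndependent_col (A := (of u)ᵀ) hu hN
  calc (w l ⬝ᵥ b) • Nᵀ *ᵥ v l
      = ((w l ⬝ᵥ b) • v l) ᵥ* N := by rw [mulVec_transpose, smul_vecMul]
    _ = (w l ⬝ᵥ a) • v l := congrFun cancelled l

end CommSemiring

theorem leurgans_right_eigenvectors_general {K : Type*} [Semifield K] [Fintype ι] [Fintype n]
    [Fintype p] {X : m → n → p → K} {u : ι → m → K} {v : ι → n → K} {w : ι → p → K}
    (hX : X = polyadicTensor u v w) (hu : LinearIndependent K u) {a b : p → K}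
    {N : Matrix n n K} (hN : modeThreeContraction X b * N = modeThreeContraction X a)
    {l : ι} (hb : w l ⬝ᵥ b ≠ 0) :
    Nᵀ *ᵥ v l = (w l ⬝ᵥ a / w l ⬝ᵥ b) • v l := by
  subst hX
  rw [div_eq_inv_mul, mul_smul, eq_inv_smul_iff₀ hb]
  exact dotProduct_smul_transpose_mulVec_eq hu hN l

/-- If `X³_b · N = X³ₐ` and the `uₗ` are linearly independent and `⟨wₗ, b⟩ ≠ 0`,
then each `vₗ` is an eigenvector of `Nᵀ` with eigenvalue `⟨wₗ, a⟩ / ⟨wₗ, b⟩`. -/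
theorem leurgans_right_eigenvectors {n₁ n₂ n₃ r : ℕ}
    (X : Fin n₁ → Fin n₂ → Fin n₃ → ℝ)
    (u : Fin r → Fin n₁ → ℝ) (v : Fin r → Fin n₂ → ℝ) (w : Fin r → Fin n₃ → ℝ)
    (hX : ∀ i j k, X i j k = ∑ l, u l i * v l j * w l k)
    (hu : LinearIndependent ℝ u)
    (a b : Fin n₃ → ℝ) (hb : ∀ l, (∑ k, w l k * b k) ≠ 0)
    (N : Matrix (Fin n₂) (Fin n₂) ℝ)
    (hN : (Matrix.of fun i j => ∑ k, X i j k * b k) * N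
            = (Matrix.of fun i j => ∑ k, X i j k * a k)) :
    ∀ l, (Matrix.transpose N).mulVec (v l) = ((∑ k, w l k * a k) / (∑ k, w l k * b k)) • v l :=
  fun l ↦ leurgans_right_eigenvectors_general
    (funext fun i ↦ funext fun j ↦ funext fun k ↦ hX i j k) hu hN (hb l)
end

section
/- Let u_1, \ldots, u_r \in \mathbb{R}^{n} and let v_1, \ldots, v_r \in \mathbb{R}^{n'} be linearly independent. Let \nu_1, \ldots, \nu_r \in \mathbb{R} and \mu_1, \ldots, \mu_r \in \mathbb{R} with \mu_l \neq 0 for every l, and set X_A = \sum_{l=1}^r \nu_l\, u_l v_l^T and X_B = \sum_{l=1}^r \mu_l\, u_l v_l^T (n \times n' matrices). Then every matrix M \in \mathbb{R}^{n \times n} satisfying M \cdot X_B = X_A satisfies M u_l = (\nu_l / \mu_l)\, u_l for every l = 1, \ldots, r; i.e., each u_l is an eigenvector of M with eigenvalue \nu_l / \mu_l. -/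
section

open Matrix

variable {R ι m n p : Type*} [Fintype ι]

theorem sum_vecMulVec_left_injective [Semiring R] {v : ι → n → R} (hv : LinearIndependent R v) :
    Function.Injective fun a : ι → m → R => ∑ l, vecMulVec (a l) (v l) := by
  intro a b hab
  ext l i
  have row_eq : ∑ l, a l i • v l = ∑ l, b l i • v l := by
    ext j
    simpa only [Matrix.sum_apply, vecMulVec_apply, Finset.sum_apply, Pi.smul_apply, smul_eq_mul]
      using congr_fun₂ hab i j
  exact Fintype.linearIndependent_iffₛ.mp hv (a · i) (b · i) row_eq l

theorem mul_sum_vecMulVec_eq_sum_vecMulVec_iff [Semiring R] [Fintype m] {v : ι → n → R}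
    (hv : LinearIndependent R v) (M : Matrix p m R) (a : ι → m → R) (b : ι → p → R) :
    M * ∑ l, vecMulVec (a l) (v l) = ∑ l, vecMulVec (b l) (v l) ↔ ∀ l, M *ᵥ a l = b l := by
  simp only [Matrix.mul_sum, mul_vecMulVec]
  exact (sum_vecMulVec_left_injective hv).eq_iff.trans funext_iff

theorem higher_order_leurgans_eigenvectors_general [Semifield R] [Fintype m]
    (u : ι → m → R) (v : ι → n → R) (hv : LinearIndependent R v) (ν μ : ι → R)
    (M : Matrix m m R)
    (hM : M * ∑ l, μ l • vecMulVec (u l) (v l) = ∑ l, ν l • vecMulVec (u l) (v l))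
    {l : ι} (hμ : μ l ≠ 0) :
    M *ᵥ u l = (ν l / μ l) • u l := by
  simp only [← smul_vecMulVec] at hM
  have smul_mulVec_eq : μ l • M *ᵥ u l = ν l • u l := by
    rw [← mulVec_smul]
    exact (mul_sum_vecMulVec_eq_sum_vecMulVec_iff hv M _ _).mp hM l
  rw [div_eq_inv_mul, mul_smul, ← smul_mulVec_eq, inv_smul_smul₀ hμ]

end

/-- Eigendecomposition step of higher-order Leurgans: if `M · X_B = X_A` with
`X_A = ∑ₗ νₗ uₗ vₗᵀ`, `X_B = ∑ₗ μₗ uₗ vₗᵀ`, the `vₗ` linearly independent and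
`μₗ ≠ 0`, then `M uₗ = (νₗ / μₗ) uₗ` for every `l`. -/
theorem higher_order_leurgans_eigenvectors {n n' r : ℕ}
    (u : Fin r → Fin n → ℝ) (v : Fin r → Fin n' → ℝ)
    (hv : LinearIndependent ℝ v)
    (ν μ : Fin r → ℝ) (hμ : ∀ l, μ l ≠ 0)
    (M : Matrix (Fin n) (Fin n) ℝ)
    (hM : M * (∑ l, μ l • Matrix.vecMulVec (u l) (v l))
            = ∑ l, ν l • Matrix.vecMulVec (u l) (v l)) :
    ∀ l, M.mulVec (u l) = (ν l / μ l) • u l :=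
  fun l => higher_order_leurgans_eigenvectors_general u v hv ν μ M hM (hμ l)
end
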